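/- arXiv:1810.08901 — 6 statements merged into one kernel-verified Lean document; each statement's English description precedes it below -/
import Mathlib

section
/- Suppose the signal increments become uniform across agents after some time i₀, i.e. r_{k,i} − r_{k,i-1} = r_{k',i} − r_{k',i-1} for all agents k, k' and all i > i₀. Then the dynamic average diffusion iterates w_{k,i} = Σ_{ℓ=1}^K a_{ℓk} (w_{ℓ,i-1} + r_{ℓ,i} − r_{ℓ,i-1}), initialized with w_{k,0} = r_{k,0}, satisfy lim_{i→∞} ‖w_{k,i} − r̄_i‖ = 0 for every agent k, where r̄_i = (1/K) Σ_{k=1}^K r_{k,i}. -/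
/-!
The deviation `e i k = w i k - r̄ i` has zero sum over the agents at every time, because `A` has
unit row sums (`sum_iterate_eq`). Once the increments are uniform, each of them equals the
increment of the average `r̄`, so the unit column sums turn the recursion into the unforced one
`e (i + 1) k = ∑ l, A l k • e i l`.

For a zero-sum vector, subtracting a constant `ε` from all entries of `A ^ m` does not change its
action. With `ε > 0` the least entry of `A ^ m`, the remaining weights are nonnegative and sum to
`1 - K ε` in each column, so `m` steps shrink the sup norm of `e` over the agents by the factor
`1 - K ε < 1` (`norm_weighted_le`). As the norm is also nonincreasing, it tends to `0`
(`tendsto_of_diffusion`).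
-/

open Finset Filter

/-- A weighted combination of a zero-sum family, with weights at least `ε` summing to `1`, is
bounded by `1 - n ε` times the sup norm of the family, where `n` is its size. For `ε = 0` the
family need not have zero sum, and the bound says that averaging does not increase the norm. -/
lemma norm_weighted_le {ι E : Type*} [Fintype ι] [NormedAddCommGroup E] [NormedSpace ℝ E]
    (b : ι → ℝ) (ε : ℝ) (hb : ∀ l, ε ≤ b l) (hsum : ∑ l, b l = 1)
    (v : ι → E) (hv : ε = 0 ∨ ∑ l, v l = 0) :
    ‖∑ l, b l • v l‖ ≤ (1 - Fintype.card ι * ε) * ‖v‖ := by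
  have h1 : ∑ l, b l • v l = ∑ l, (b l - ε) • v l := by
    simp only [sub_smul, Finset.sum_sub_distrib, ← Finset.smul_sum]
    rcases hv with h | h <;> simp [h]
  calc ‖∑ l, b l • v l‖ ≤ ∑ l, ‖(b l - ε) • v l‖ := h1 ▸ norm_sum_le _ _
    _ ≤ ∑ l, (b l - ε) * ‖v‖ := by
        refine Finset.sum_le_sum fun l _ => ?_
        rw [norm_smul, Real.norm_of_nonneg (sub_nonneg.2 (hb l))]
        exact mul_le_mul_of_nonneg_left (norm_le_pi_norm v l) (sub_nonneg.2 (hb l))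
    _ = (1 - Fintype.card ι * ε) * ‖v‖ := by
        rw [← Finset.sum_mul, Finset.sum_sub_distrib, hsum]
        simp

lemma col_sum_pow {ι : Type*} [Fintype ι] [DecidableEq ι] (A : Matrix ι ι ℝ)
    (hA : ∀ k, ∑ l, A l k = 1) (j : ℕ) (k : ι) : ∑ l, (A ^ j) l k = 1 := by
  induction j generalizing k with
  | zero => simp [Matrix.one_apply]
  | succ j ih =>
    simp only [pow_succ, Matrix.mul_apply]
    rw [Finset.sum_comm]
    simp only [← Finset.sum_mul, ih, one_mul, hA]

lemma iterate_eq_pow {ι E : Type*} [Fintype ι] [DecidableEq ι] [AddCommGroup E] [Module ℝ E]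
    (A : Matrix ι ι ℝ) (e : ℕ → ι → E) (he : ∀ i k, e (i + 1) k = ∑ l, A l k • e i l)
    (i j : ℕ) (k : ι) : e (i + j) k = ∑ l, (A ^ j) l k • e i l := by
  induction j generalizing k with
  | zero => simp [Matrix.one_apply]
  | succ j ih =>
    rw [← add_assoc, he]
    simp only [ih, pow_succ, Matrix.mul_apply, Finset.sum_smul, Finset.smul_sum, smul_smul]
    rw [Finset.sum_comm]
    simp only [mul_comm]

/-- Zero-sum iterates of a primitive column-stochastic matrix tend to zero. -/
lemma tendsto_of_diffusion {ι E : Type*} [Fintype ι] [DecidableEq ι] [Nonempty ι]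
    [NormedAddCommGroup E] [NormedSpace ℝ E] (A : Matrix ι ι ℝ)
    (hA_nonneg : ∀ l k, 0 ≤ A l k) (hA_cols : ∀ k, ∑ l, A l k = 1)
    (m : ℕ) (hm : ∀ l k, 0 < (A ^ m) l k)
    (e : ℕ → ι → E) (he : ∀ i k, e (i + 1) k = ∑ l, A l k • e i l)
    (hsum : ∀ i, ∑ k, e i k = 0) :
    Tendsto (fun i => ‖e i‖) atTop (nhds 0) := by
  obtain ⟨p, hp⟩ := Finite.exists_min fun q : ι × ι => (A ^ m) q.1 q.2
  set ε := (A ^ m) p.1 p.2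
  have hε : 0 < ε := hm _ _
  have hanti : Antitone fun i => ‖e i‖ := by
    refine antitone_nat_of_succ_le fun i => (pi_norm_le_iff_of_nonneg (norm_nonneg _)).2 fun k => ?_
    rw [he]
    simpa using norm_weighted_le (fun l => A l k) 0 (fun l => hA_nonneg l k) (hA_cols k)
      (e i) (Or.inl rfl)
  have hcontr : ∀ i, ‖e (i + m)‖ ≤ (1 - Fintype.card ι * ε) * ‖e i‖ := by
    intro i
    refine (pi_norm_le_iff_of_nonempty _).2 fun k => ?_
    rw [iterate_eq_pow A e he]
    exact norm_weighted_le (fun l => (A ^ m) l k) ε (fun l => hp (l, k))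
      (col_sum_pow A hA_cols m k) (e i) (Or.inr (hsum i))
  have hbdd : BddBelow (Set.range fun i => ‖e i‖) := ⟨0, by rintro _ ⟨i, rfl⟩; exact norm_nonneg _⟩
  have hlim := tendsto_atTop_ciInf hanti hbdd
  set L := ⨅ i, ‖e i‖
  have hL0 : 0 ≤ L := ge_of_tendsto' hlim fun i => norm_nonneg _
  -- Passing to the limit in the contraction gives `L ≤ (1 - n ε) L`, which forces `L = 0`.
  have hL : L ≤ (1 - Fintype.card ι * ε) * L :=
    le_of_tendsto_of_tendsto' ((tendsto_add_atTop_iff_nat m).2 hlim) (hlim.const_mul _) hcontr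
  have hc : 0 < (Fintype.card ι : ℝ) * ε := mul_pos (by exact_mod_cast Fintype.card_pos) hε
  have : L = 0 := by nlinarith
  rwa [this] at hlim

/-- Diffusion with unit row sums preserves the equality of the network totals of the iterates
and of the signals. -/
lemma sum_iterate_eq {ι E : Type*} [Fintype ι] [AddCommGroup E] [Module ℝ E]
    (A : Matrix ι ι ℝ) (hA_rows : ∀ l, ∑ k, A l k = 1) (r w : ℕ → ι → E)
    (h_init : ∀ k, w 0 k = r 0 k)
    (h_rec : ∀ i k, w (i + 1) k = ∑ l, A l k • (w i l + r (i + 1) l - r i l)) (i : ℕ) :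
    ∑ k, w i k = ∑ k, r i k := by
  induction i with
  | zero => simp [h_init]
  | succ i ih =>
    simp only [h_rec]
    rw [Finset.sum_comm]
    simp only [← Finset.sum_smul, hA_rows, one_smul, Finset.sum_sub_distrib,
      Finset.sum_add_distrib, ih]
    abel

/-- **Convergence of dynamic average diffusion under uniform signal increments.**
If the signal increments become uniform across agents after some time `i₀`, then the
dynamic average diffusion iterates converge to the instantaneous network average `r̄_i`. -/
theorem stmt_1 (K N : ℕ) (hK : 1 ≤ K)
    (A : Matrix (Fin K) (Fin K) ℝ)
    (hA_nonneg : ∀ l k, 0 ≤ A l k)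
    (hA_symm : A.IsSymm)
    (hA_rows : ∀ l, ∑ k, A l k = 1)
    (hA_prim : ∃ m, 1 ≤ m ∧ ∀ l k, 0 < (A ^ m) l k)
    (r w : ℕ → Fin K → EuclideanSpace ℝ (Fin N))
    (h_init : ∀ k, w 0 k = r 0 k)
    (h_rec : ∀ i k, w (i + 1) k = ∑ l, A l k • (w i l + r (i + 1) l - r i l))
    (i₀ : ℕ)
    (h_unif : ∀ i, i₀ < i → ∀ k k', r i k - r (i - 1) k = r i k' - r (i - 1) k') :
    ∀ k, Tendsto (fun i => ‖w i k - (K : ℝ)⁻¹ • ∑ k', r i k'‖) atTop (nhds 0) := by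
  intro k
  obtain ⟨m, -, hm⟩ := hA_prim
  have : Nonempty (Fin K) := ⟨⟨0, hK⟩⟩
  have hK0 : (K : ℝ) ≠ 0 := by exact_mod_cast (by omega : K ≠ 0)
  have hcols : ∀ k, ∑ l, A l k = 1 := fun k => by
    rw [← hA_rows k]
    exact Finset.sum_congr rfl fun l _ => hA_symm.apply k l
  let rbar : ℕ → EuclideanSpace ℝ (Fin N) := fun i => (K : ℝ)⁻¹ • ∑ k', r i k'
  have hK_smul : ∀ v : EuclideanSpace ℝ (Fin N), (K : ℝ)⁻¹ • ∑ _k : Fin K, v = v := fun v => by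
    rw [Finset.sum_const, Finset.card_univ, Fintype.card_fin, ← Nat.cast_smul_eq_nsmul ℝ,
      smul_smul, inv_mul_cancel₀ hK0, one_smul]
  -- After time `i₀`, every agent's increment is the increment of the average.
  have hinc : ∀ i, i₀ ≤ i → ∀ l, r (i + 1) l - r i l = rbar (i + 1) - rbar i := by
    intro i hi l
    have h := h_unif (i + 1) (by omega) l
    simp only [Nat.add_sub_cancel] at h
    rw [← hK_smul (r (i + 1) l - r i l), Finset.sum_congr rfl fun k' _ => h k',
      Finset.sum_sub_distrib, smul_sub]
  let e : ℕ → Fin K → EuclideanSpace ℝ (Fin N) := fun n k => w (n + i₀) k - rbar (n + i₀)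
  have he : ∀ n k, e (n + 1) k = ∑ l, A l k • e n l := by
    intro n k
    have h1 : ∀ l, w (n + i₀) l + r (n + i₀ + 1) l - r (n + i₀) l
        = e n l + rbar (n + i₀ + 1) := fun l => by
      rw [add_sub_assoc, hinc _ (by omega)]
      simp only [e]
      abel
    have h2 : n + 1 + i₀ = n + i₀ + 1 := by omega
    change w (n + 1 + i₀) k - rbar (n + 1 + i₀) = _
    rw [h2, h_rec]
    simp only [h1, smul_add, Finset.sum_add_distrib, ← Finset.sum_smul, hcols, one_smul,
      add_sub_cancel_right]
  have hsum : ∀ n, ∑ k, e n k = 0 := by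
    intro n
    simp only [e, Finset.sum_sub_distrib, sum_iterate_eq A hA_rows r w h_init h_rec]
    rw [sub_eq_zero, ← hK_smul (∑ k, r (n + i₀) k), ← Finset.smul_sum]
  have hlim := tendsto_of_diffusion A hA_nonneg hcols m hm e he hsum
  rw [← tendsto_add_atTop_iff_nat i₀]
  exact squeeze_zero (fun _ => norm_nonneg _) (fun n => norm_le_pi_norm (e n) k) hlim
end

section
/- Run the coordinate-wise dynamic average diffusion recursion (Algorithm 3) with an arbitrary (deterministic) sequence of selected indices n_i ∈ {1,…,N}: for each i ≥ 1, w_{k,i}(n_i) = Σ_{ℓ=1}^K a_{ℓk} (w_{ℓ,i-1}(n_i) + r_{ℓ,i}(n_i) − v_{ℓ,i-1}(n_i)) and w_{k,i}(n) = w_{k,i-1}(n) for n ≠ n_i; v_{k,i}(n_i) = r_{k,i}(n_i) and v_{k,i}(n) = v_{k,i-1}(n) for n ≠ n_i; initialized with w_{k,0} = v_{k,0} = r_{k,0}. Then for every entry n ∈ {1,…,N} and every iteration i ≥ 0, Σ_{k=1}^K w_{k,i}(n) = Σ_{k=1}^K v_{k,i}(n). -/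
open Finset

/-- **Conservation of the network sum in Algorithm 3 (coordinate-wise dynamic average
diffusion) with an arbitrary deterministic index sequence.**
At every iteration and for every entry, the sum over agents of the iterates equals the
sum over agents of the memory variables. -/
theorem stmt_2 (K N : ℕ) (hK : 1 ≤ K)
    (A : Matrix (Fin K) (Fin K) ℝ)
    (hA_nonneg : ∀ l k, 0 ≤ A l k)
    (hA_cols : ∀ k, ∑ l, A l k = 1)
    (hA_rows : ∀ l, ∑ k, A l k = 1)
    (r : ℕ → Fin K → Fin N → ℝ)
    (idx : ℕ → Fin N)
    (w v : ℕ → Fin K → Fin N → ℝ)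
    (h_w0 : ∀ k, w 0 k = r 0 k)
    (h_v0 : ∀ k, v 0 k = r 0 k)
    (h_w : ∀ i k n, w (i + 1) k n =
      if n = idx (i + 1) then ∑ l, A l k * (w i l n + r (i + 1) l n - v i l n)
      else w i k n)
    (h_v : ∀ i k n, v (i + 1) k n =
      if n = idx (i + 1) then r (i + 1) k n else v i k n) :
    ∀ i n, ∑ k, w i k n = ∑ k, v i k n := by
  intro i
  induction i with
  | zero => intro n; simp only [h_w0, h_v0]
  | succ i ih =>
    intro n
    simp only [h_w, h_v]
    split_ifs with h
    · -- Summing over the receiving agents `k` first, each row of `A` contributes `1`.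
      rw [Finset.sum_comm]
      simp only [← Finset.sum_mul, hA_rows, one_mul]
      rw [Finset.sum_sub_distrib, Finset.sum_add_distrib, ih n]
      ring
    · exact ih n
end

section
/- Let A ∈ ℝ^{K×K} be symmetric and doubly stochastic, let P = (1/K)𝟙𝟙ᵀ, and let λ ∈ (0,1) be such that ‖(A − P)x‖ ≤ λ‖x‖ for all x ∈ ℝ^K. Then for every integer N ≥ 1 and all vectors w, r, v ∈ ℝ^K: ((N−1)/N)‖(I − P)w‖² + (1/N)‖(A − P)(w + r − v)‖² ≤ (1 − (1−λ)/N)‖(I − P)w‖² + (λ²/(N(1−λ)))‖r − v‖², where ‖·‖ denotes the Euclidean norm. -/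
/-!
Since the rows of `A` sum to one, `(A - P) P = 0`, so `(A - P)(w + r - v) = (A - P)((1 - P) w + (r - v))`
and its norm is at most `λ (a + b)` with `a = ‖(1 - P) w‖`, `b = ‖r - v‖`. Convexity of the square
with weights `λ` and `1 - λ` gives `(a + b)² ≤ a² / λ + b² / (1 - λ)`, hence
`‖(A - P)(w + r - v)‖² ≤ λ a² + λ² / (1 - λ) b²`; averaging with weights `(N - 1) / N` and `1 / N`
concludes.
-/

lemma sub_mul_one_sub_averaging {K : ℕ} (hK : 1 ≤ K) (A P : Matrix (Fin K) (Fin K) ℝ)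
    (hA_rows : ∀ l, ∑ k, A l k = 1) (hP : P = Matrix.of fun _ _ => (K : ℝ)⁻¹) :
    (A - P) * (1 - P) = A - P := by
  have hK0 : (K : ℝ) ≠ 0 := by positivity
  have h : (A - P) * P = 0 := by
    subst hP
    ext i j
    simp [Matrix.mul_apply, ← Finset.sum_mul, Finset.sum_sub_distrib, hA_rows, hK0]
  rw [mul_sub, mul_one, h, sub_zero]

/-- Young's inequality with weights `c` and `1 - c`, multiplied through by `c ^ 2`. -/
lemma sq_mul_add_le {c a b : ℝ} (hc0 : 0 < c) (hc1 : c < 1) :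
    (c * (a + b)) ^ 2 ≤ c * a ^ 2 + c ^ 2 / (1 - c) * b ^ 2 := by
  have h1 : 0 < 1 - c := by linarith
  have key : c * a ^ 2 + c ^ 2 / (1 - c) * b ^ 2 - (c * (a + b)) ^ 2
      = c * ((1 - c) * a - c * b) ^ 2 / (1 - c) := by
    field_simp
    ring
  have : 0 ≤ c * ((1 - c) * a - c * b) ^ 2 / (1 - c) := by positivity
  linarith

/-- **Per-entry one-step expected contraction for Algorithm 3.**
With `P = (1/K)𝟙𝟙ᵀ` and `λ ∈ (0,1)` a contraction factor for `A − P`, the expected squared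
deviation from consensus (over a uniformly chosen coordinate out of `N`) contracts. -/
theorem stmt_3 (K N : ℕ) (hK : 1 ≤ K) (hN : 1 ≤ N)
    (A : Matrix (Fin K) (Fin K) ℝ)
    (hA_symm : A.IsSymm)
    (hA_nonneg : ∀ l k, 0 ≤ A l k)
    (hA_rows : ∀ l, ∑ k, A l k = 1)
    (P : Matrix (Fin K) (Fin K) ℝ)
    (hP : P = Matrix.of fun _ _ => (K : ℝ)⁻¹)
    (lam : ℝ) (hlam0 : 0 < lam) (hlam1 : lam < 1)
    (hlam : ∀ x : EuclideanSpace ℝ (Fin K),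
      ‖Matrix.toEuclideanLin (A - P) x‖ ≤ lam * ‖x‖)
    (w r v : EuclideanSpace ℝ (Fin K)) :
    ((N : ℝ) - 1) / N * ‖Matrix.toEuclideanLin ((1 : Matrix (Fin K) (Fin K) ℝ) - P) w‖ ^ 2
      + (N : ℝ)⁻¹ * ‖Matrix.toEuclideanLin (A - P) (w + r - v)‖ ^ 2
    ≤ (1 - (1 - lam) / N) *
        ‖Matrix.toEuclideanLin ((1 : Matrix (Fin K) (Fin K) ℝ) - P) w‖ ^ 2
      + lam ^ 2 / (N * (1 - lam)) * ‖r - v‖ ^ 2 := by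
  have hN0 : (0 : ℝ) < N := by exact_mod_cast hN
  have h1 : 0 < 1 - lam := by linarith
  have hshift : Matrix.toEuclideanLin (A - P) (w + r - v)
      = Matrix.toEuclideanLin (A - P)
          (Matrix.toEuclideanLin ((1 : Matrix (Fin K) (Fin K) ℝ) - P) w + (r - v)) := by
    have hw : Matrix.toEuclideanLin (A - P)
        (Matrix.toEuclideanLin ((1 : Matrix (Fin K) (Fin K) ℝ) - P) w)
        = Matrix.toEuclideanLin (A - P) w := by
      simp only [Matrix.toLpLin_apply, Matrix.mulVec_mulVec,
        sub_mul_one_sub_averaging hK A P hA_rows hP]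
    rw [map_add, hw, ← map_add, add_sub_assoc]
  rw [hshift]
  set y := Matrix.toEuclideanLin ((1 : Matrix (Fin K) (Fin K) ℝ) - P) w
  have hle : ‖Matrix.toEuclideanLin (A - P) (y + (r - v))‖ ≤ lam * (‖y‖ + ‖r - v‖) :=
    (hlam _).trans (mul_le_mul_of_nonneg_left (norm_add_le _ _) hlam0.le)
  have hsq : ‖Matrix.toEuclideanLin (A - P) (y + (r - v))‖ ^ 2
      ≤ lam * ‖y‖ ^ 2 + lam ^ 2 / (1 - lam) * ‖r - v‖ ^ 2 :=
    (pow_le_pow_left₀ (norm_nonneg _) hle 2).trans (sq_mul_add_le hlam0 hlam1)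
  calc _ ≤ ((N : ℝ) - 1) / N * ‖y‖ ^ 2
        + (N : ℝ)⁻¹ * (lam * ‖y‖ ^ 2 + lam ^ 2 / (1 - lam) * ‖r - v‖ ^ 2) := by gcongr
    _ = _ := by
      field_simp
      ring
end

section
/- (Mean-square convergence of Algorithm 3.) Consider Algorithm 3 with indices n₁, n₂, … drawn independently and uniformly from {1,…,N}: at iteration i, w_{k,i}(n_i) = Σ_{ℓ=1}^K a_{ℓk} (w_{ℓ,i-1}(n_i) + r_{ℓ,i}(n_i) − v_{ℓ,i-1}(n_i)) and w_{k,i}(n) = w_{k,i-1}(n) for n ≠ n_i; v_{k,i}(n_i) = r_{k,i}(n_i) and v_{k,i}(n) = v_{k,i-1}(n) for n ≠ n_i; initialized with w_{k,0} = v_{k,0} = r_{k,0}. If each signal r_{k,i} converges as i → ∞ to a limiting value r_k ∈ ℝ^N, then for every agent k, lim_{i→∞} E‖w_{k,i} − r̄_i‖² = 0, where r̄_i = (1/K) Σ_{k=1}^K r_{k,i} and the expectation is over the i.i.d. uniform index sequence. -/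
/-!
Fix a coordinate `n`. Whenever `n` is selected, the pair `(w, v)` of vectors in `ℝ^K` is replaced
by `(A (w + x - v), x)`, where `x` is the current signal; otherwise it does not move. The identity
`∑ w = ∑ v` is preserved, so `u = w - mean v` has zero sum, and it is updated to
`A (u + (d - mean d))` with `d = x - v`.

On zero-sum vectors `A` is a strict Euclidean contraction (`exists_contraction`): the Dirichlet
form identity `dirichlet_identity` shows that `‖A u‖ = ‖u‖` forces `A² u = u`, hence
`A^(2m) u = u`, and positivity of `A^(2m)` forces `u` to be constant; compactness of the unit
sphere makes the contraction uniform. Consequently the Lyapunov function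
`Q = ‖u‖² + M ‖v - c‖²`, where `c` is the limit of the signals, satisfies `Q' ≤ γ Q + D ‖x - c‖²`
at each selection of `n`, with `γ < 1` (`lyapunov_step`). Averaging over the uniformly selected
index gives `E Q_{i+1} ≤ (1 - (1 - γ) / N) E Q_i + o(1)`, so `E Q_i → 0`, and `Q` dominates the
squared deviation from the current mean up to a multiple of `‖x - c‖²`.
-/

open Finset Filter

/-- The state `(w, v)` of Algorithm 3 (coordinate-wise dynamic average diffusion) after `i`
iterations, as a function of the sequence `s` of the `i` uniformly selected coordinate
indices: at iteration `i+1` the selected entry `s (Fin.last i)` of `w` is updated by the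
diffusion combination using the memory `v`, all other entries stay unchanged, and the memory
records the observed entry of the signal. -/
noncomputable def alg3State (K N : ℕ) (A : Matrix (Fin K) (Fin K) ℝ)
    (r : ℕ → Fin K → Fin N → ℝ) :
    (i : ℕ) → (Fin i → Fin N) → ((Fin K → Fin N → ℝ) × (Fin K → Fin N → ℝ))
  | 0, _ => (r 0, r 0)
  | i + 1, s =>
      let prev := alg3State K N A r i fun j => s j.castSucc
      let ni := s (Fin.last i)
      (fun k n =>
        if n = ni then ∑ l, A l k * (prev.1 l n + r (i + 1) l n - prev.2 l n)
        else prev.1 k n,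
       fun k n => if n = ni then r (i + 1) k n else prev.2 k n)

/-! ### Perturbed linear recursions -/

/-- A sequence driven by a contraction plus a vanishing perturbation vanishes. -/
lemma tendsto_zero_of_contraction {e δ : ℕ → ℝ} {q : ℝ} (hq0 : 0 ≤ q) (hq1 : q < 1)
    (he : ∀ i, 0 ≤ e i) (hrec : ∀ i, e (i + 1) ≤ q * e i + δ i)
    (hδ : Tendsto δ atTop (nhds 0)) : Tendsto e atTop (nhds 0) := by
  rw [Metric.tendsto_atTop]
  intro ε hε
  obtain ⟨m, hm⟩ := Filter.eventually_atTop.1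
    (hδ.eventually (gt_mem_nhds (show (0 : ℝ) < (1 - q) * (ε / 2) by
      have : 0 < 1 - q := by linarith
      positivity)))
  have h1 : ∀ j, e (m + j) - ε / 2 ≤ q ^ j * e m := by
    intro j
    induction j with
    | zero => simp; linarith
    | succ j ih =>
      have a := hrec (m + j)
      have b := hm (m + j) (by omega)
      have c := mul_le_mul_of_nonneg_left ih hq0
      rw [← add_assoc, pow_succ]
      linarith
  have h2 : Tendsto (fun j => q ^ j * e m) atTop (nhds 0) := by
    simpa using (tendsto_pow_atTop_nhds_zero_of_lt_one hq0 hq1).mul_const (e m)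
  obtain ⟨p, hp⟩ := Filter.eventually_atTop.1 (h2.eventually (gt_mem_nhds (half_pos hε)))
  refine ⟨m + p, fun i hi => ?_⟩
  obtain ⟨j, rfl⟩ := Nat.exists_eq_add_of_le (show m ≤ i by omega)
  have := h1 j
  have := hp j (by omega)
  rw [Real.dist_eq, sub_zero, abs_of_nonneg (he _)]
  linarith

/-! ### Contraction of the combination matrix on zero-sum vectors -/

/-- For a symmetric stochastic matrix `B`, the form `⟨u, (1 - B) u⟩` is a Dirichlet form. -/
lemma dirichlet_identity {K : ℕ} (B : Matrix (Fin K) (Fin K) ℝ) (hs : B.IsSymm)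
    (hr : ∀ l, ∑ k, B l k = 1) (u : Fin K → ℝ) :
    ∑ l, ∑ k, B l k * (u l - u k) ^ 2 = 2 * (u ⬝ᵥ u - u ⬝ᵥ (B.mulVec u)) := by
  have h1 : ∑ l, ∑ k, B l k * u l ^ 2 = u ⬝ᵥ u := by
    simp only [← Finset.sum_mul, hr, dotProduct]
    exact Finset.sum_congr rfl fun _ _ => by ring
  have h2 : ∑ l, ∑ k, B l k * u k ^ 2 = u ⬝ᵥ u := by
    rw [Finset.sum_comm, ← h1]
    exact Finset.sum_congr rfl fun l _ => Finset.sum_congr rfl fun k _ => by rw [hs.apply]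
  have h3 : ∑ l, ∑ k, u l * (B l k * u k) = u ⬝ᵥ (B.mulVec u) := by
    simp only [dotProduct, Matrix.mulVec, Finset.mul_sum]
  calc ∑ l, ∑ k, B l k * (u l - u k) ^ 2
      = ∑ l, ∑ k, (B l k * u l ^ 2 + B l k * u k ^ 2 - 2 * (u l * (B l k * u k))) :=
        Finset.sum_congr rfl fun _ _ => Finset.sum_congr rfl fun _ _ => by ring
    _ = _ := by
        simp only [Finset.sum_sub_distrib, Finset.sum_add_distrib, ← Finset.mul_sum]
        simp only [← Finset.mul_sum] at h3
        rw [h1, h2, h3]; ring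

lemma pow_rows {K : ℕ} (A : Matrix (Fin K) (Fin K) ℝ) (hr : ∀ l, ∑ k, A l k = 1) (m : ℕ) :
    ∀ l, ∑ k, (A ^ m) l k = 1 := by
  have h1 : A.mulVec 1 = 1 := by
    ext l; simp [Matrix.mulVec, dotProduct, hr]
  have h2 : (A ^ m).mulVec 1 = 1 := by
    induction m with
    | zero => simp
    | succ m ih => rw [pow_succ, ← Matrix.mulVec_mulVec, h1, ih]
  intro l
  simpa [Matrix.mulVec, dotProduct] using congrFun h2 l

lemma pow_nonneg_entries {K : ℕ} (A : Matrix (Fin K) (Fin K) ℝ) (h : ∀ l k, 0 ≤ A l k)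
    (m : ℕ) : ∀ l k, 0 ≤ (A ^ m) l k := by
  induction m with
  | zero =>
    intro l k
    rw [pow_zero, Matrix.one_apply]
    split_ifs <;> norm_num
  | succ m ih =>
    intro l k
    rw [pow_succ, Matrix.mul_apply]
    exact Finset.sum_nonneg fun j _ => mul_nonneg (ih l j) (h j k)

lemma symm_dotProduct_mulVec {K : ℕ} (A : Matrix (Fin K) (Fin K) ℝ) (hs : A.IsSymm)
    (u : Fin K → ℝ) :
    A.mulVec u ⬝ᵥ A.mulVec u = u ⬝ᵥ (A ^ 2).mulVec u := by
  rw [pow_two, ← Matrix.mulVec_mulVec, Matrix.dotProduct_mulVec u A, ← Matrix.mulVec_transpose,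
    hs.eq]

/-- Nonzero zero-sum vectors are strictly shrunk by `A`. -/
lemma strict_contraction {K : ℕ} (A : Matrix (Fin K) (Fin K) ℝ)
    (h0 : ∀ l k, 0 ≤ A l k) (hs : A.IsSymm) (hr : ∀ l, ∑ k, A l k = 1)
    (hp : ∃ m, 1 ≤ m ∧ ∀ l k, 0 < (A ^ m) l k) (u : Fin K → ℝ) (hu : ∑ k, u k = 0)
    (hne : u ≠ 0) : A.mulVec u ⬝ᵥ A.mulVec u < u ⬝ᵥ u := by
  obtain ⟨m, -, hm⟩ := hp
  rw [symm_dotProduct_mulVec A hs]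
  have hn2 := pow_nonneg_entries A h0 2
  have hid := dirichlet_identity (A ^ 2) (hs.pow 2) (pow_rows A hr 2) u
  have hterm : ∀ l k, 0 ≤ (A ^ 2) l k * (u l - u k) ^ 2 :=
    fun l k => mul_nonneg (hn2 l k) (sq_nonneg _)
  by_contra hcon
  have hsum : ∑ l, ∑ k, (A ^ 2) l k * (u l - u k) ^ 2 = 0 := by
    apply le_antisymm
    · rw [hid]; linarith
    · exact Finset.sum_nonneg fun l _ => Finset.sum_nonneg fun k _ => hterm l k
  have hz : ∀ l k, (A ^ 2) l k * (u l - u k) ^ 2 = 0 := by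
    intro l k
    have a := (Finset.sum_eq_zero_iff_of_nonneg
      (fun l _ => Finset.sum_nonneg fun k _ => hterm l k)).1 hsum l (Finset.mem_univ l)
    exact (Finset.sum_eq_zero_iff_of_nonneg (fun k _ => hterm l k)).1 a k (Finset.mem_univ k)
  have hfix : (A ^ 2).mulVec u = u := by
    ext l
    calc (A ^ 2).mulVec u l = ∑ k, (A ^ 2) l k * u k := rfl
      _ = ∑ k, (A ^ 2) l k * u l := by
          refine Finset.sum_congr rfl fun k _ => ?_
          rcases mul_eq_zero.1 (hz l k) with h | h
          · rw [h]; simp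
          · rw [sub_eq_zero.1 (pow_eq_zero_iff two_ne_zero |>.1 h)]
      _ = u l := by rw [← Finset.sum_mul, pow_rows A hr 2, one_mul]
  have hfix' : ((A ^ 2) ^ m).mulVec u = u := by
    clear hm
    induction m with
    | zero => simp
    | succ m ih => rw [pow_succ, ← Matrix.mulVec_mulVec, hfix, ih]
  have hpos : ∀ l k, 0 < ((A ^ 2) ^ m) l k := by
    intro l k
    rw [← pow_mul, mul_comm, pow_mul, pow_two, Matrix.mul_apply]
    exact Finset.sum_pos (fun j _ => mul_pos (hm l j) (hm j k)) ⟨l, Finset.mem_univ l⟩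
  have hid' := dirichlet_identity ((A ^ 2) ^ m) ((hs.pow 2).pow m)
    (pow_rows _ (pow_rows A hr 2) m) u
  rw [hfix', sub_self, mul_zero] at hid'
  have hterm' : ∀ l k, 0 ≤ ((A ^ 2) ^ m) l k * (u l - u k) ^ 2 :=
    fun l k => mul_nonneg (hpos l k).le (sq_nonneg _)
  have hconst : ∀ l k, u l = u k := by
    intro l k
    have a := (Finset.sum_eq_zero_iff_of_nonneg
      (fun l _ => Finset.sum_nonneg fun k _ => hterm' l k)).1 hid' l (Finset.mem_univ l)
    have b := (Finset.sum_eq_zero_iff_of_nonneg (fun k _ => hterm' l k)).1 a k (Finset.mem_univ k)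
    rcases mul_eq_zero.1 b with h | h
    · exact absurd h (hpos l k).ne'
    · exact sub_eq_zero.1 (pow_eq_zero_iff two_ne_zero |>.1 h)
  apply hne
  ext l
  have : (K : ℝ) * u l = 0 := by
    rw [← hu, Finset.sum_congr rfl fun k _ => hconst k l]
    simp
  have hK : (K : ℝ) ≠ 0 := by
    have := l.pos
    positivity
  simpa [hK] using this

/-- On the zero-sum subspace `A` contracts Euclidean norms by a uniform factor. -/
lemma exists_contraction {K : ℕ} (A : Matrix (Fin K) (Fin K) ℝ)
    (h0 : ∀ l k, 0 ≤ A l k) (hs : A.IsSymm) (hr : ∀ l, ∑ k, A l k = 1)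
    (hp : ∃ m, 1 ≤ m ∧ ∀ l k, 0 < (A ^ m) l k) :
    ∃ ρ : ℝ, 0 ≤ ρ ∧ ρ < 1 ∧ ∀ u : Fin K → ℝ, ∑ k, u k = 0 →
      A.mulVec u ⬝ᵥ A.mulVec u ≤ ρ * (u ⬝ᵥ u) := by
  set S : Set (Fin K → ℝ) := {u | u ⬝ᵥ u = 1 ∧ ∑ k, u k = 0} with hS
  have hcd : Continuous fun u : Fin K → ℝ => u ⬝ᵥ u := by
    unfold dotProduct; fun_prop
  have hcA : Continuous fun u : Fin K → ℝ => A.mulVec u ⬝ᵥ A.mulVec u := by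
    simp only [Matrix.mulVec, dotProduct]; fun_prop
  have hclosed : IsClosed S :=
    (isClosed_eq hcd continuous_const).inter
      (isClosed_eq (by fun_prop : Continuous fun u : Fin K → ℝ => ∑ k, u k) continuous_const)
  have hcomp : IsCompact S := by
    refine (isCompact_closedBall (0 : Fin K → ℝ) 1).of_isClosed_subset hclosed ?_
    rintro u ⟨hu, -⟩
    rw [mem_closedBall_zero_iff, pi_norm_le_iff_of_nonneg zero_le_one]
    intro k
    rw [Real.norm_eq_abs, ← sq_le_one_iff_abs_le_one, ← hu, dotProduct, pow_two]
    exact Finset.single_le_sum (f := fun k => u k * u k) (fun j _ => mul_self_nonneg _)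
      (Finset.mem_univ k)
  -- a common bound on the sphere, whether or not the sphere is empty (as for one agent)
  obtain ⟨ρ, hρ0, hρ1, hρ⟩ : ∃ ρ : ℝ, 0 ≤ ρ ∧ ρ < 1 ∧
      ∀ u ∈ S, A.mulVec u ⬝ᵥ A.mulVec u ≤ ρ := by
    rcases S.eq_empty_or_nonempty with he | hne
    · exact ⟨0, le_rfl, zero_lt_one, by simp [he]⟩
    · obtain ⟨z, hz, hmax⟩ := hcomp.exists_isMaxOn hne hcA.continuousOn
      refine ⟨_, ?_, ?_, fun u hu => hmax hu⟩
      · exact Finset.sum_nonneg fun k _ => mul_self_nonneg _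
      · have := strict_contraction A h0 hs hr hp z hz.2 (by
          rintro rfl
          simpa using hz.1)
        rwa [hz.1] at this
  refine ⟨ρ, hρ0, hρ1, fun u hu => ?_⟩
  by_cases hu0 : u = 0
  · simp [hu0]
  have hpos : 0 < u ⬝ᵥ u := by
    have h1 : 0 ≤ u ⬝ᵥ u := Finset.sum_nonneg fun k _ => mul_self_nonneg _
    exact lt_of_le_of_ne h1 fun h => hu0 (dotProduct_self_eq_zero.1 h.symm)
  set t := Real.sqrt (u ⬝ᵥ u) with ht
  have htp : 0 < t := Real.sqrt_pos.2 hpos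
  have htt : t * t = u ⬝ᵥ u := Real.mul_self_sqrt hpos.le
  have key := hρ (t⁻¹ • u) ⟨by
    rw [smul_dotProduct, dotProduct_smul, smul_eq_mul, smul_eq_mul, ← htt]
    field_simp, by
    simp [← Finset.mul_sum, hu]⟩
  rw [Matrix.mulVec_smul, smul_dotProduct, dotProduct_smul, smul_eq_mul, smul_eq_mul,
    ← mul_assoc, ← mul_inv, htt, inv_mul_le_iff₀ hpos] at key
  linarith

/-! ### The Lyapunov function of one coordinate -/

/-- The Lyapunov function of one coordinate: squared distance of `w` to the mean of the memory
`v`, plus a multiple of the squared distance of `v` to the limit `c`. -/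
noncomputable def lyap {K : ℕ} (M : ℝ) (c w v : Fin K → ℝ) : ℝ :=
  ∑ k, (w k - (K : ℝ)⁻¹ * ∑ l, v l) ^ 2 + M * ∑ k, (v k - c k) ^ 2

lemma sum_sub_mean {K : ℕ} (hK : 1 ≤ K) (d : Fin K → ℝ) :
    ∑ k, (d k - (K : ℝ)⁻¹ * ∑ l, d l) = 0 := by
  have : (K : ℝ) ≠ 0 := by positivity
  rw [Finset.sum_sub_distrib]
  simp
  field_simp
  simp

lemma sum_sub_mean_sq_le {K : ℕ} (hK : 1 ≤ K) (d : Fin K → ℝ) :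
    ∑ k, (d k - (K : ℝ)⁻¹ * ∑ l, d l) ^ 2 ≤ ∑ k, d k ^ 2 := by
  have h0 := sum_sub_mean hK d
  set μ := (K : ℝ)⁻¹ * ∑ l, d l
  have : ∑ k, d k ^ 2 = ∑ k, (d k - μ) ^ 2 + 2 * μ * ∑ k, (d k - μ) + K * μ ^ 2 := by
    rw [Finset.mul_sum, ← Finset.sum_add_distrib]
    have : (K : ℝ) * μ ^ 2 = ∑ k : Fin K, μ ^ 2 := by simp
    rw [this, ← Finset.sum_add_distrib]
    exact Finset.sum_congr rfl fun _ _ => by ring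
  rw [this, h0]
  have : 0 ≤ (K : ℝ) * μ ^ 2 := by positivity
  linarith

lemma sum_sq_sub_le {K : ℕ} (a b c : Fin K → ℝ) :
    ∑ k, (a k - b k) ^ 2 ≤ 2 * ∑ k, (a k - c k) ^ 2 + 2 * ∑ k, (b k - c k) ^ 2 := by
  rw [Finset.mul_sum, Finset.mul_sum, ← Finset.sum_add_distrib]
  exact Finset.sum_le_sum fun k _ => by nlinarith [sq_nonneg (a k - c k + (b k - c k))]

/-- One selection of the coordinate contracts the Lyapunov function up to an error controlled by
the distance of the current signal to its limit. -/
lemma lyapunov_step {K : ℕ} (hK : 1 ≤ K) (A : Matrix (Fin K) (Fin K) ℝ)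
    (h0 : ∀ l k, 0 ≤ A l k) (hs : A.IsSymm) (hr : ∀ l, ∑ k, A l k = 1)
    (hp : ∃ m, 1 ≤ m ∧ ∀ l k, 0 < (A ^ m) l k) :
    ∃ M γ D : ℝ, 2 ≤ M ∧ 0 ≤ γ ∧ γ < 1 ∧ ∀ c w v x : Fin K → ℝ, ∑ k, w k = ∑ k, v k →
      lyap M c (fun k => ∑ l, A l k * (w l + x l - v l)) x
        ≤ γ * lyap M c w v + D * ∑ k, (x k - c k) ^ 2 := by
  obtain ⟨ρ, hρ0, hρ1, hρ⟩ := exists_contraction A h0 hs hr hp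
  -- `ε` is small enough for `ρ * (1 + ε) ≤ (1 + ρ) / 2`
  obtain ⟨ε, hε⟩ : ∃ ε, ε = (1 - ρ) / 2 := ⟨_, rfl⟩
  have hεp : 0 < ε := by linarith
  obtain ⟨C, hC⟩ : ∃ C, C = 1 + ε⁻¹ := ⟨_, rfl⟩
  have hCp : 1 ≤ C := by have := inv_pos.2 hεp; linarith
  refine ⟨4 * C, (1 + ρ) / 2, 6 * C, by linarith, by linarith, by linarith, ?_⟩
  intro c w v x hwv
  set y : Fin K → ℝ := fun k => w k + x k - v k - (K : ℝ)⁻¹ * ∑ l, x l with hy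
  set d : Fin K → ℝ := fun k => x k - v k with hd
  have hdsum : ∑ l, d l = ∑ l, x l - ∑ l, v l := by simp [hd]
  have hy0 : ∑ k, y k = 0 := by
    have := sum_sub_mean hK (fun k => x k)
    rw [← this, hy]
    simp only [Finset.sum_sub_distrib, Finset.sum_add_distrib, hwv]
    ring
  have hAy : ∑ k, (∑ l, A l k * (w l + x l - v l) - (K : ℝ)⁻¹ * ∑ l, x l) ^ 2
      = A.mulVec y ⬝ᵥ A.mulVec y := by
    refine Finset.sum_congr rfl fun k _ => ?_
    rw [pow_two]
    have : A.mulVec y k = ∑ l, A l k * (w l + x l - v l) - (K : ℝ)⁻¹ * ∑ l, x l := by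
      simp only [Matrix.mulVec, dotProduct, hy, mul_sub (A k _) _ ((K : ℝ)⁻¹ * ∑ l, x l)]
      rw [Finset.sum_sub_distrib, ← Finset.sum_mul, hr, one_mul]
      congr 1
      exact Finset.sum_congr rfl fun l _ => by rw [hs.apply]
    rw [this]
  have hyy : y ⬝ᵥ y ≤ (1 + ε) * ∑ k, (w k - (K : ℝ)⁻¹ * ∑ l, v l) ^ 2
      + C * ∑ k, (d k - (K : ℝ)⁻¹ * ∑ l, d l) ^ 2 := by
    rw [Finset.mul_sum _ _ (1 + ε), Finset.mul_sum _ _ C, ← Finset.sum_add_distrib]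
    refine Finset.sum_le_sum fun k _ => ?_
    have hyk : y k = (w k - (K : ℝ)⁻¹ * ∑ l, v l) + (d k - (K : ℝ)⁻¹ * ∑ l, d l) := by
      rw [hdsum]; simp only [hy, hd]; ring
    rw [hyk, hC]
    generalize w k - (K : ℝ)⁻¹ * ∑ l, v l = a
    generalize d k - (K : ℝ)⁻¹ * ∑ l, d l = b
    have h1 : 0 ≤ ε⁻¹ * (ε * a - b) ^ 2 := by positivity
    have h2 : ε⁻¹ * (ε * a - b) ^ 2 = ε * a ^ 2 - 2 * a * b + ε⁻¹ * b ^ 2 := by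
      field_simp
      ring
    linarith
  have hdd := (sum_sub_mean_sq_le hK d).trans (sum_sq_sub_le x v c)
  have hcon := hρ y hy0
  unfold lyap
  rw [hAy]
  have hU : 0 ≤ ∑ k, (w k - (K : ℝ)⁻¹ * ∑ l, v l) ^ 2 := Finset.sum_nonneg fun _ _ => sq_nonneg _
  have hV : 0 ≤ ∑ k, (v k - c k) ^ 2 := Finset.sum_nonneg fun _ _ => sq_nonneg _
  have hX : 0 ≤ ∑ k, (x k - c k) ^ 2 := Finset.sum_nonneg fun _ _ => sq_nonneg _
  generalize ∑ k, (w k - (K : ℝ)⁻¹ * ∑ l, v l) ^ 2 = U at *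
  generalize ∑ k, (v k - c k) ^ 2 = V at *
  generalize ∑ k, (x k - c k) ^ 2 = X at *
  have e1 := mul_le_mul_of_nonneg_left hyy hρ0
  have e2 := mul_le_mul_of_nonneg_left hdd (show 0 ≤ C by linarith)
  have e3 : ρ * (1 + ε) * U ≤ (1 + ρ) / 2 * U :=
    mul_le_mul_of_nonneg_right (by rw [hε]; nlinarith) hU
  have e4 : ρ * (C * ∑ k, (d k - (K : ℝ)⁻¹ * ∑ l, d l) ^ 2) ≤ C * (2 * X + 2 * V) := by
    refine (mul_le_of_le_one_left ?_ hρ1.le).trans e2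
    exact mul_nonneg (by linarith) (Finset.sum_nonneg fun _ _ => sq_nonneg _)
  have e5 : 0 ≤ ρ * (C * V) := by positivity
  linarith

/-- The Lyapunov function controls the deviation from the mean of the current signal `x`. -/
lemma dev_le_lyap {K : ℕ} (hK : 1 ≤ K) {M : ℝ} (hM : 2 ≤ M) (c w v x : Fin K → ℝ) (k : Fin K) :
    (w k - (K : ℝ)⁻¹ * ∑ l, x l) ^ 2 ≤ 2 * lyap M c w v + 4 * ∑ l, (x l - c l) ^ 2 := by
  have h1 : (w k - (K : ℝ)⁻¹ * ∑ l, v l) ^ 2 ≤ ∑ k, (w k - (K : ℝ)⁻¹ * ∑ l, v l) ^ 2 :=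
    Finset.single_le_sum (f := fun k => (w k - (K : ℝ)⁻¹ * ∑ l, v l) ^ 2)
      (fun _ _ => sq_nonneg _) (Finset.mem_univ k)
  have h2 : ((K : ℝ)⁻¹ * ∑ l, (v l - x l)) ^ 2 ≤ ∑ l, (v l - x l) ^ 2 := by
    have hcs := sq_sum_le_card_mul_sum_sq (s := Finset.univ) (f := fun l => v l - x l)
    rw [Finset.card_univ, Fintype.card_fin] at hcs
    have hK' : (1 : ℝ) ≤ K := by exact_mod_cast hK
    have hn : 0 ≤ ∑ l, (v l - x l) ^ 2 := Finset.sum_nonneg fun _ _ => sq_nonneg _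
    rw [mul_pow, inv_pow, inv_mul_le_iff₀ (by positivity)]
    refine hcs.trans (mul_le_mul_of_nonneg_right ?_ hn)
    nlinarith
  have h3 := sum_sq_sub_le v x c
  have hV : 0 ≤ ∑ k, (v k - c k) ^ 2 := Finset.sum_nonneg fun _ _ => sq_nonneg _
  have h4 : w k - (K : ℝ)⁻¹ * ∑ l, x l
      = (w k - (K : ℝ)⁻¹ * ∑ l, v l) + (K : ℝ)⁻¹ * ∑ l, (v l - x l) := by
    rw [Finset.sum_sub_distrib]; ring
  rw [h4]
  unfold lyap
  nlinarith [sq_nonneg ((w k - (K : ℝ)⁻¹ * ∑ l, v l) - (K : ℝ)⁻¹ * ∑ l, (v l - x l)),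
    mul_le_mul_of_nonneg_right hM hV]

/-! ### Averaging over the selected indices -/

/-- The diffusion step with memory preserves the identity `∑ w = ∑ v` in every coordinate. -/
lemma alg3_sum_eq {K N : ℕ} (A : Matrix (Fin K) (Fin K) ℝ) (hs : A.IsSymm)
    (hr : ∀ l, ∑ k, A l k = 1) (r : ℕ → Fin K → Fin N → ℝ) (n : Fin N) :
    ∀ (i : ℕ) (s : Fin i → Fin N),
      ∑ k, (alg3State K N A r i s).1 k n = ∑ k, (alg3State K N A r i s).2 k n
  | 0, _ => rfl
  | i + 1, s => by
      have ih := alg3_sum_eq A hs hr r n i fun j => s j.castSucc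
      simp only [alg3State]
      split_ifs with h
      · have hc : ∀ l, ∑ k, A k l = 1 := fun l => by
          rw [← hr l]; exact Finset.sum_congr rfl fun k _ => hs.apply l k
        rw [Finset.sum_comm]
        simp only [← Finset.sum_mul, hr, one_mul]
        rw [Finset.sum_sub_distrib, Finset.sum_add_distrib, ih]
        ring
      · exact ih

/-- The expected value of the Lyapunov function of coordinate `n` after `i` iterations. -/
noncomputable def expLyap (K N : ℕ) (A : Matrix (Fin K) (Fin K) ℝ) (r : ℕ → Fin K → Fin N → ℝ)
    (M : ℝ) (c : Fin K → ℝ) (n : Fin N) (i : ℕ) : ℝ :=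
  ((N : ℝ) ^ i)⁻¹ * ∑ s : Fin i → Fin N,
    lyap M c (fun k => (alg3State K N A r i s).1 k n) (fun k => (alg3State K N A r i s).2 k n)

/-- Averaging over the last index: coordinate `n` is selected with probability `1 / N`. -/
lemma expLyap_succ_le {K N : ℕ} (hN : 1 ≤ N) (A : Matrix (Fin K) (Fin K) ℝ) (hs : A.IsSymm)
    (hr : ∀ l, ∑ k, A l k = 1) (r : ℕ → Fin K → Fin N → ℝ) (c : Fin K → ℝ) {M γ D : ℝ}
    (hstep : ∀ w v x : Fin K → ℝ, ∑ k, w k = ∑ k, v k →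
      lyap M c (fun k => ∑ l, A l k * (w l + x l - v l)) x
        ≤ γ * lyap M c w v + D * ∑ k, (x k - c k) ^ 2) (n : Fin N) (i : ℕ) :
    expLyap K N A r M c n (i + 1) ≤ (1 - (1 - γ) / N) * expLyap K N A r M c n i
      + D * (∑ k, (r (i + 1) k n - c k) ^ 2) / N := by
  have hNp : (0 : ℝ) < N := by positivity
  unfold expLyap
  set X := ∑ k, (r (i + 1) k n - c k) ^ 2
  set L : (Fin i → Fin N) → ℝ := fun s =>
    lyap M c (fun k => (alg3State K N A r i s).1 k n) (fun k => (alg3State K N A r i s).2 k n)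
    with hL
  have hmain : ∑ s : Fin (i + 1) → Fin N, lyap M c (fun k => (alg3State K N A r (i + 1) s).1 k n)
      (fun k => (alg3State K N A r (i + 1) s).2 k n)
      ≤ ∑ s : Fin i → Fin N, ((N - 1 + γ) * L s + D * X) := by
    rw [← (Fin.snocEquiv fun _ => Fin N).sum_comp, Fintype.sum_prod_type_right]
    refine Finset.sum_le_sum fun s _ => ?_
    have hval : ∀ a : Fin N, lyap M c
        (fun k => (alg3State K N A r (i + 1) (Fin.snocEquiv (fun _ => Fin N) (a, s))).1 k n)
        (fun k => (alg3State K N A r (i + 1) (Fin.snocEquiv (fun _ => Fin N) (a, s))).2 k n)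
        ≤ L s + if n = a then (γ - 1) * L s + D * X else 0 := by
      intro a
      simp only [alg3State, Fin.snocEquiv_apply, Fin.snoc_castSucc, Fin.snoc_last]
      split_ifs with h
      · refine (hstep _ _ (fun k => r (i + 1) k n) (alg3_sum_eq A hs hr r n i s)).trans ?_
        simp only [hL, X]
        linarith
      · simp [hL]
    refine (Finset.sum_le_sum fun a _ => hval a).trans (le_of_eq ?_)
    rw [Finset.sum_add_distrib, Finset.sum_ite_eq]
    simp
    ring
  refine (mul_le_mul_of_nonneg_left hmain (by positivity)).trans (le_of_eq ?_)
  rw [Finset.sum_add_distrib, ← Finset.mul_sum]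
  simp only [Finset.sum_const, Finset.card_univ, Fintype.card_fun, Fintype.card_fin, nsmul_eq_mul,
    Nat.cast_pow]
  field_simp
  ring

/-- **Mean-square convergence of Algorithm 3.** If each signal `r_{k,i}` converges, then
for every agent `k` the expectation (over the i.i.d. uniform coordinate selections, written
as the average over all index sequences of length `i`) of the squared Euclidean deviation
`‖w_{k,i} − r̄_i‖²` tends to zero. -/
theorem stmt_5 (K N : ℕ) (hK : 1 ≤ K) (hN : 1 ≤ N)
    (A : Matrix (Fin K) (Fin K) ℝ)
    (hA_nonneg : ∀ l k, 0 ≤ A l k)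
    (hA_symm : A.IsSymm)
    (hA_rows : ∀ l, ∑ k, A l k = 1)
    (hA_prim : ∃ m, 1 ≤ m ∧ ∀ l k, 0 < (A ^ m) l k)
    (r : ℕ → Fin K → Fin N → ℝ)
    (rlim : Fin K → Fin N → ℝ)
    (h_conv : ∀ k n, Tendsto (fun i => r i k n) atTop (nhds (rlim k n))) :
    ∀ k, Tendsto (fun i =>
        ((N : ℝ) ^ i)⁻¹ * ∑ s : Fin i → Fin N,
          ∑ n, ((alg3State K N A r i s).1 k n - (K : ℝ)⁻¹ * ∑ k', r i k' n) ^ 2)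
      atTop (nhds 0) := by
  intro k
  obtain ⟨M, γ, D, hM, hγ0, hγ1, hstep⟩ := lyapunov_step hK A hA_nonneg hA_symm hA_rows hA_prim
  have hNp : (1 : ℝ) ≤ N := by exact_mod_cast hN
  have hX : ∀ n, Tendsto (fun i => ∑ l, (r i l n - rlim l n) ^ 2) atTop (nhds 0) := by
    intro n
    have : Tendsto (fun i => ∑ l, (r i l n - rlim l n) ^ 2) atTop
        (nhds (∑ l, (rlim l n - rlim l n) ^ 2)) :=
      tendsto_finsetSum _ fun l _ => ((h_conv l n).sub_const _).pow 2
    simpa using this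
  have hE : ∀ n, Tendsto (expLyap K N A r M (fun l => rlim l n) n) atTop (nhds 0) := by
    intro n
    have hdiv : (1 - γ) / N ≤ 1 := by rw [div_le_one (by linarith)]; linarith
    have hdiv' : 0 < (1 - γ) / N := div_pos (by linarith) (by linarith)
    refine tendsto_zero_of_contraction (q := 1 - (1 - γ) / N) (by linarith) (by linarith) ?_
      (expLyap_succ_le hN A hA_symm hA_rows r _ (hstep _) n) ?_
    · intro i
      refine mul_nonneg (by positivity) (Finset.sum_nonneg fun s _ => ?_)
      unfold lyap
      positivity
    · simpa using (((hX n).comp (tendsto_add_atTop_nat 1)).const_mul D).div_const (N : ℝ)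
  have hbound : Tendsto (fun i => ∑ n, (2 * expLyap K N A r M (fun l => rlim l n) n i
      + 4 * ∑ l, (r i l n - rlim l n) ^ 2)) atTop (nhds 0) := by
    have := tendsto_finsetSum (Finset.univ : Finset (Fin N)) fun n _ =>
      ((hE n).const_mul 2).add ((hX n).const_mul 4)
    simpa using this
  refine squeeze_zero (fun i => by positivity) (fun i => ?_) hbound
  rw [Finset.sum_comm, Finset.mul_sum]
  refine Finset.sum_le_sum fun n _ => ?_
  refine (mul_le_mul_of_nonneg_left (Finset.sum_le_sum fun s _ =>
    dev_le_lyap hK hM (fun l => rlim l n) (fun k => (alg3State K N A r i s).1 k n)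
      (fun k => (alg3State K N A r i s).2 k n) (fun l => r i l n) k)
    (by positivity)).trans (le_of_eq ?_)
  unfold expLyap
  rw [Finset.sum_add_distrib, ← Finset.mul_sum]
  simp only [Finset.sum_const, Finset.card_univ, Fintype.card_fun, Fintype.card_fin, nsmul_eq_mul,
    Nat.cast_pow]
  field_simp
end

section
/- (Linear rate of Algorithm 3 for static signals.) Consider Algorithm 3 with indices n₁, n₂, … drawn independently and uniformly from {1,…,N}, run on static signals r_{k,i} ≡ r_k ∈ ℝ^N, initialized with w_{k,0} = v_{k,0} = r_k. Let λ denote the operator 2-norm of A − (1/K)𝟙𝟙ᵀ and set α = 1 − (1−λ)/N. Then for every entry n and every iteration i ≥ 0: Σ_{k=1}^K E|w_{k,i}(n) − r̄(n)|² ≤ α^i Σ_{k=1}^K |r_k(n) − r̄(n)|², where r̄ = (1/K) Σ_{k=1}^K r_k. -/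
/-!
On a static signal `v` stays equal to `r`, so a step only replaces the selected column `w(·, n)` by
`Aᵀ w(·, n)`. Double stochasticity preserves the column mean, so the deviation `d` from `r̄(n)` has
zero mean and `Aᵀ d = (A - J) d` with `J = 𝟙𝟙ᵀ / K`. Hence `‖Aᵀ d‖² ≤ λ² ‖d‖² ≤ λ ‖d‖²`, where `λ ≤ 1`
because `‖(A - J) x‖² = ‖A x‖² - ‖J x‖² ≤ ‖x‖²`, the last bound by Jensen's inequality
(`contraction_of_mean_zero`). Averaging over which of the `N` indices is selected, the entry `n`
is contracted with probability `1 / N` and otherwise unchanged, which multiplies the expected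
deviation by at most `1 - (1 - λ) / N` (`sum_deviation_succ_le`).
-/

open Finset Filter

/-- Jensen's inequality for the rows of `A`, summed with unit column sums. -/
lemma sum_sq_mulVec_le {K : ℕ} (A : Matrix (Fin K) (Fin K) ℝ)
    (h0 : ∀ l k, 0 ≤ A l k) (hr : ∀ l, ∑ k, A l k = 1) (hc : ∀ k, ∑ l, A l k = 1)
    (x : Fin K → ℝ) :
    ∑ k, (∑ l, A k l * x l) ^ 2 ≤ ∑ l, x l ^ 2 := by
  calc ∑ k, (∑ l, A k l * x l) ^ 2
      ≤ ∑ k, ∑ l, A k l * x l ^ 2 := by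
        refine Finset.sum_le_sum fun k _ => ?_
        have h := (even_two.convexOn_pow (𝕜 := ℝ)).map_sum_le (t := Finset.univ)
          (w := fun l => A k l) (p := x) (fun l _ => h0 k l) (hr k) (fun _ _ => Set.mem_univ _)
        simpa [smul_eq_mul] using h
    _ = ∑ l, x l ^ 2 := by
        rw [Finset.sum_comm]
        refine Finset.sum_congr rfl fun l _ => ?_
        rw [← Finset.sum_mul, hc, one_mul]

/-- Subtracting the mean does not increase the sum of squares. -/
lemma sum_sq_sub_mean_le {K : ℕ} (y : Fin K → ℝ) (c : ℝ)
    (hc : ∑ k, y k = K * c) : ∑ k, (y k - c) ^ 2 ≤ ∑ k, y k ^ 2 := by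
  have h : ∑ k, (y k - c) ^ 2 = ∑ k, y k ^ 2 - 2 * c * ∑ k, y k + K * c ^ 2 := by
    simp only [sub_sq, Finset.sum_add_distrib, Finset.sum_sub_distrib, Finset.mul_sum]
    simp only [Finset.sum_const, Finset.card_univ, Fintype.card_fin, nsmul_eq_mul]
    congr 2
    exact Finset.sum_congr rfl fun k _ => by ring
  rw [h, hc]
  nlinarith [mul_nonneg (Nat.cast_nonneg K : (0 : ℝ) ≤ K) (sq_nonneg c)]

lemma opNorm_sub_mean_le_one {K : ℕ} (hK : 1 ≤ K) (A : Matrix (Fin K) (Fin K) ℝ)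
    (h0 : ∀ l k, 0 ≤ A l k) (hr : ∀ l, ∑ k, A l k = 1) (hc : ∀ k, ∑ l, A l k = 1) :
    ‖Matrix.toEuclideanCLM (𝕜 := ℝ) (n := Fin K)
      (A - Matrix.of fun _ _ => (K : ℝ)⁻¹)‖ ≤ 1 := by
  have hK0 : (K : ℝ) ≠ 0 := by positivity
  refine ContinuousLinearMap.opNorm_le_bound _ zero_le_one fun x => ?_
  rw [one_mul, ← sq_le_sq₀ (norm_nonneg _) (norm_nonneg _), EuclideanSpace.real_norm_sq_eq,
    EuclideanSpace.real_norm_sq_eq]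
  have e : ∀ k, (Matrix.toEuclideanCLM (𝕜 := ℝ) (n := Fin K)
      (A - Matrix.of fun _ _ => (K : ℝ)⁻¹) x) k = ∑ l, A k l * x l - (K : ℝ)⁻¹ * ∑ l, x l := by
    intro k
    simp [Matrix.ofLp_toEuclideanCLM, Matrix.mulVec, dotProduct,
      Finset.mul_sum]
  simp only [e]
  refine (sum_sq_sub_mean_le _ _ ?_).trans (sum_sq_mulVec_le A h0 hr hc x)
  rw [Finset.sum_comm, mul_inv_cancel_left₀ hK0]
  exact Finset.sum_congr rfl fun l _ => by rw [← Finset.sum_mul, hc, one_mul]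

/-- On mean-zero vectors, `A` acts as `A - 𝟙𝟙ᵀ / K`; since the norm of the latter is at most one,
the squared contraction factor is at most the norm itself. -/
lemma contraction_of_mean_zero {K : ℕ} (hK : 1 ≤ K) (A : Matrix (Fin K) (Fin K) ℝ)
    (h0 : ∀ l k, 0 ≤ A l k) (hs : A.IsSymm) (hr : ∀ l, ∑ k, A l k = 1)
    (d : Fin K → ℝ) (hd : ∑ k, d k = 0) :
    ∑ k, (∑ l, A l k * d l) ^ 2 ≤ ‖Matrix.toEuclideanCLM (𝕜 := ℝ) (n := Fin K)
      (A - Matrix.of fun _ _ => (K : ℝ)⁻¹)‖ * ∑ k, d k ^ 2 := by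
  have hc : ∀ k, ∑ l, A l k = 1 := fun k => by
    rw [← hr k]; exact Finset.sum_congr rfl fun l _ => hs.apply k l
  have h1 := opNorm_sub_mean_le_one hK A h0 hr hc
  set T := Matrix.toEuclideanCLM (𝕜 := ℝ) (n := Fin K) (A - Matrix.of fun _ _ => (K : ℝ)⁻¹) with hT
  have e : ∀ k, (T (WithLp.toLp 2 d)) k = ∑ l, A l k * d l := by
    intro k
    have : ∀ l, A k l = A l k := fun l => hs.apply l k
    simp [hT, Matrix.mulVec, dotProduct,
      ← Finset.mul_sum, hd, this]
  have h2 := pow_le_pow_left₀ (norm_nonneg _) (T.le_opNorm (WithLp.toLp 2 d)) 2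
  rw [mul_pow, EuclideanSpace.real_norm_sq_eq, EuclideanSpace.real_norm_sq_eq] at h2
  simp only [e] at h2
  refine h2.trans (mul_le_mul_of_nonneg_right ?_ (Finset.sum_nonneg fun _ _ => sq_nonneg _))
  nlinarith [norm_nonneg T]

section Static

variable {K N : ℕ} (A : Matrix (Fin K) (Fin K) ℝ) (r : Fin K → Fin N → ℝ)

lemma alg3State_static_snd (i : ℕ) (s : Fin i → Fin N) :
    (alg3State K N A (fun _ => r) i s).2 = r := by
  induction i with
  | zero => rfl
  | succ i ih =>
    funext k n
    simp [alg3State, ih]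

lemma alg3State_static_snoc (i : ℕ) (s : Fin i → Fin N) (m : Fin N) (k : Fin K) (n : Fin N) :
    (alg3State K N A (fun _ => r) (i + 1) (Fin.snoc s m)).1 k n =
      if n = m then ∑ l, A l k * (alg3State K N A (fun _ => r) i s).1 l n
      else (alg3State K N A (fun _ => r) i s).1 k n := by
  simp [alg3State, alg3State_static_snd]

lemma sum_alg3State_static (hr : ∀ l, ∑ k, A l k = 1) (i : ℕ) (s : Fin i → Fin N) (n : Fin N) :
    ∑ k, (alg3State K N A (fun _ => r) i s).1 k n = ∑ k, r k n := by
  induction i with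
  | zero => rfl
  | succ i ih =>
    rw [← Fin.snoc_init_self s]
    simp only [alg3State_static_snoc]
    split_ifs with h
    · rw [Finset.sum_comm, ← ih (Fin.init s)]
      exact Finset.sum_congr rfl fun l _ => by rw [← Finset.sum_mul, hr, one_mul]
    · exact ih _

/-- Squared deviation of entry `n` from its network average after the selections `s`. -/
noncomputable def deviation (i : ℕ) (s : Fin i → Fin N) (n : Fin N) : ℝ :=
  ∑ k, ((alg3State K N A (fun _ => r) i s).1 k n - (K : ℝ)⁻¹ * ∑ k', r k' n) ^ 2

/-- One-step bound, summed over the index selected in the last iteration: one of the `N` choices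
contracts the deviation of entry `n`, the others leave it unchanged. -/
lemma sum_deviation_succ_le (hK : 1 ≤ K) (h0 : ∀ l k, 0 ≤ A l k) (hs : A.IsSymm)
    (hr : ∀ l, ∑ k, A l k = 1) (i : ℕ) (s : Fin i → Fin N) (n : Fin N) :
    ∑ m, deviation A r (i + 1) (Fin.snoc s m) n ≤
      (N - 1 + ‖Matrix.toEuclideanCLM (𝕜 := ℝ) (n := Fin K)
        (A - Matrix.of fun _ _ => (K : ℝ)⁻¹)‖) * deviation A r i s n := by
  have hK0 : (K : ℝ) ≠ 0 := by positivity
  have hc : ∀ k, ∑ l, A l k = 1 := fun k => by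
    rw [← hr k]; exact Finset.sum_congr rfl fun l _ => hs.apply k l
  have hsel : deviation A r (i + 1) (Fin.snoc s n) n ≤
      ‖Matrix.toEuclideanCLM (𝕜 := ℝ) (n := Fin K)
        (A - Matrix.of fun _ _ => (K : ℝ)⁻¹)‖ * deviation A r i s n := by
    unfold deviation
    simp only [alg3State_static_snoc, if_true]
    refine le_trans (le_of_eq ?_) (contraction_of_mean_zero hK A h0 hs hr _ ?_)
    · refine Finset.sum_congr rfl fun k _ => ?_
      simp only [mul_sub, Finset.sum_sub_distrib]
      rw [← Finset.sum_mul, hc, one_mul]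
    · rw [Finset.sum_sub_distrib, sum_alg3State_static A r hr]
      simp [mul_inv_cancel_left₀ hK0]
  have hne : ∀ m ∈ Finset.univ.erase n,
      deviation A r (i + 1) (Fin.snoc s m) n = deviation A r i s n := by
    intro m hm
    unfold deviation
    simp only [alg3State_static_snoc, if_neg (Finset.ne_of_mem_erase hm).symm]
  have hN : 1 ≤ N := n.pos
  rw [← Finset.sum_erase_add _ _ (Finset.mem_univ n), Finset.sum_congr rfl hne, Finset.sum_const,
    Finset.card_erase_of_mem (Finset.mem_univ n), Finset.card_univ, Fintype.card_fin, nsmul_eq_mul,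
    Nat.cast_sub hN, Nat.cast_one, add_mul]
  gcongr

end Static

/-- **Linear rate of Algorithm 3 for static signals.** Run on static signals `r_k` with
`λ` the operator 2-norm of `A − (1/K)𝟙𝟙ᵀ` and `α = 1 − (1−λ)/N`, the summed expected
squared per-entry deviation from the average `r̄` decays as `α^i`.  The expectation over the
i.i.d. uniform coordinate selections is written as the average over all index sequences. -/
theorem stmt_6 (K N : ℕ) (hK : 1 ≤ K) (hN : 1 ≤ N)
    (A : Matrix (Fin K) (Fin K) ℝ)
    (hA_nonneg : ∀ l k, 0 ≤ A l k)
    (hA_symm : A.IsSymm)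
    (hA_rows : ∀ l, ∑ k, A l k = 1)
    (hA_prim : ∃ m, 1 ≤ m ∧ ∀ l k, 0 < (A ^ m) l k)
    (rstat : Fin K → Fin N → ℝ)
    (lam : ℝ)
    (hlam : lam = ‖Matrix.toEuclideanCLM (𝕜 := ℝ) (n := Fin K)
      (A - Matrix.of fun _ _ => (K : ℝ)⁻¹)‖) :
    ∀ n i,
      ∑ k, ((N : ℝ) ^ i)⁻¹ * ∑ s : Fin i → Fin N,
          ((alg3State K N A (fun _ => rstat) i s).1 k n
            - (K : ℝ)⁻¹ * ∑ k', rstat k' n) ^ 2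
      ≤ (1 - (1 - lam) / N) ^ i *
          ∑ k, (rstat k n - (K : ℝ)⁻¹ * ∑ k', rstat k' n) ^ 2 := by
  intro n i
  have hN0 : (0 : ℝ) < N := by positivity
  have hN1 : (1 : ℝ) ≤ N := by exact_mod_cast hN
  have hlam0 : 0 ≤ lam := hlam ▸ norm_nonneg _
  have hE : ∀ i, ∑ k, ((N : ℝ) ^ i)⁻¹ * ∑ s : Fin i → Fin N,
      ((alg3State K N A (fun _ => rstat) i s).1 k n - (K : ℝ)⁻¹ * ∑ k', rstat k' n) ^ 2
      = ((N : ℝ) ^ i)⁻¹ * ∑ s : Fin i → Fin N, deviation A rstat i s n := by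
    intro i
    rw [← Finset.mul_sum, Finset.sum_comm]
    rfl
  rw [hE]
  have hα : 1 - (1 - lam) / N = (N : ℝ)⁻¹ * (N - 1 + lam) := by
    field_simp
    ring
  rw [hα]
  induction i with
  | zero => simp [deviation, alg3State]
  | succ i ih =>
    have hsplit : ∑ s : Fin (i + 1) → Fin N, deviation A rstat (i + 1) s n =
        ∑ s : Fin i → Fin N, ∑ m, deviation A rstat (i + 1) (Fin.snoc s m) n := by
      rw [← (Fin.snocEquiv fun _ => Fin N).sum_comp, Fintype.sum_prod_type, Finset.sum_comm]
      rfl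
    calc ((N : ℝ) ^ (i + 1))⁻¹ * ∑ s : Fin (i + 1) → Fin N, deviation A rstat (i + 1) s n
        ≤ ((N : ℝ) ^ (i + 1))⁻¹ * ∑ s : Fin i → Fin N,
            (N - 1 + lam) * deviation A rstat i s n := by
          rw [hsplit, hlam]
          gcongr with s
          exact sum_deviation_succ_le A rstat hK hA_nonneg hA_symm hA_rows i s n
      _ = ((N : ℝ)⁻¹ * (N - 1 + lam)) *
            (((N : ℝ) ^ i)⁻¹ * ∑ s : Fin i → Fin N, deviation A rstat i s n) := by
          rw [← Finset.mul_sum, pow_succ, mul_inv]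
          ring
      _ ≤ _ := by
          have hα0 : 0 ≤ (N : ℝ)⁻¹ * (N - 1 + lam) :=
            mul_nonneg (by positivity) (by linarith)
          rw [pow_succ', mul_assoc _ (_ ^ i)]
          exact mul_le_mul_of_nonneg_left ih hα0
end

section
/- Run Algorithm 4 with an arbitrary (deterministic) double sequence of selected indices n_i^k ∈ {1,…,N}: for each i ≥ 1 and each entry n, w_{k,i}(n) = 1[n ≠ n_i^k] w_{k,i-1}(n) + Σ_{ℓ=1}^K a_{ℓk} 1[n = n_i^ℓ] (w_{ℓ,i-1}(n) + r_{ℓ,i}(n) − v_{ℓ,i-1}(n)); p_{k,i}(n) = 1[n ≠ n_i^k] p_{k,i-1}(n) + Σ_{ℓ=1}^K a_{ℓk} 1[n = n_i^ℓ] p_{ℓ,i-1}(n); v_{k,i}(n) = 1[n ≠ n_i^k] v_{k,i-1}(n) + 1[n = n_i^k] r_{k,i}(n); initialized with w_{k,0} = v_{k,0} = r_{k,0} and p_{k,0} = 𝟙 (all-ones vector in ℝ^N). Then for every entry n and every iteration i ≥ 0: Σ_{k=1}^K p_{k,i}(n) = K and Σ_{k=1}^K w_{k,i}(n) = Σ_{k=1}^K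 v_{k,i}(n). -/
/-! The combination step is sum-preserving: an active agent `l` replaces its entry by shares
`A l k * y l` sent to all agents `k`, and these shares add up to `y l` because the `l`-th row of `A`
sums to one. So after one iteration the network sum is that of the entries `y l` at active agents
and the old entries at the others (`sum_combine`). With `y = p` this leaves the sum unchanged;
with `y = w + r - v` the sum of `w` changes by `r - v` at every active agent, exactly as the
sum of `v` does. Both conservation laws follow by induction on the iteration. -/

open Finset

/-- Summed over all agents, combining the values `y` of the active agents (those with `c k`)
through a matrix with unit row sums has the same effect as replacing `x k` by `y k` at each of
them. -/
lemma sum_combine {ι : Type*} [Fintype ι] (A : Matrix ι ι ℝ) (hA : ∀ l, ∑ k, A l k = 1)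
    (c : ι → Prop) [DecidablePred c] (x y : ι → ℝ) :
    ∑ k, ((if c k then 0 else x k) + ∑ l, if c l then A l k * y l else 0)
      = ∑ k, if c k then y k else x k := by
  rw [Finset.sum_add_distrib, Finset.sum_comm, ← Finset.sum_add_distrib]
  refine Finset.sum_congr rfl fun l _ => ?_
  by_cases h : c l
  · simp [h, ← Finset.sum_mul, hA]
  · simp [h]

/-- **Conservation laws for Algorithm 4 (dynamic average diffusion with independent
coordinate selections) under an arbitrary deterministic index double sequence.**
For every entry `n` and iteration `i`, the push-sum weights sum to `K` and the sum of the
iterates over the agents equals the sum of the memory variables. -/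
theorem stmt_13 (K N : ℕ) (hK : 1 ≤ K)
    (A : Matrix (Fin K) (Fin K) ℝ)
    (hA_nonneg : ∀ l k, 0 ≤ A l k)
    (hA_symm : A.IsSymm)
    (hA_rows : ∀ l, ∑ k, A l k = 1)
    (r : ℕ → Fin K → Fin N → ℝ)
    (idx : ℕ → Fin K → Fin N)
    (w p v : ℕ → Fin K → Fin N → ℝ)
    (h_w0 : ∀ k, w 0 k = r 0 k)
    (h_v0 : ∀ k, v 0 k = r 0 k)
    (h_p0 : ∀ k n, p 0 k n = 1)
    (h_w : ∀ i k n, w (i + 1) k n =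
      (if n = idx (i + 1) k then 0 else w i k n)
        + ∑ l, if n = idx (i + 1) l then A l k * (w i l n + r (i + 1) l n - v i l n)
            else 0)
    (h_p : ∀ i k n, p (i + 1) k n =
      (if n = idx (i + 1) k then 0 else p i k n)
        + ∑ l, if n = idx (i + 1) l then A l k * p i l n else 0)
    (h_v : ∀ i k n, v (i + 1) k n =
      if n = idx (i + 1) k then r (i + 1) k n else v i k n) :
    ∀ i n, (∑ k, p i k n = K) ∧ ∑ k, w i k n = ∑ k, v i k n := by
  intro i n
  induction i with
  | zero => simp [h_p0, h_w0, h_v0]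
  | succ i ih =>
    obtain ⟨ihp, ihw⟩ := ih
    constructor
    · simp only [h_p]
      rw [sum_combine A hA_rows (fun k => n = idx (i + 1) k) (p i · n) (p i · n)]
      simpa using ihp
    · simp only [h_w, h_v]
      rw [sum_combine A hA_rows (fun k => n = idx (i + 1) k) (w i · n)
        (fun l => w i l n + r (i + 1) l n - v i l n)]
      -- At every agent the new summands differ by the old difference `w - v`.
      rw [← sub_eq_zero, ← Finset.sum_sub_distrib] at ihw ⊢
      rw [← ihw]
      refine Finset.sum_congr rfl fun k _ => ?_
      split_ifs <;> ring
end
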